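/- Let p be a prime with p ≡ 1 (mod 3), write p = A² + 3B² with integers A, B and A ≡ 1 (mod 3), and let a be an integer with p ∤ a. If (2a²)^((p−1)/3) ≡ 1 (mod p), then V_p(x² + a/x) = (2p − 1 + 2A)/3; if (2a²)^((p−1)/3) ≡ (−1 + A·B⁻¹)/2 (mod p), then V_p(x² + a/x) = (2p − 1 − A + 3B)/3; and if (2a²)^((p−1)/3) ≡ (−1 − A·B⁻¹)/2 (mod p), then V_p(x² + a/x) = (2p − 1 − A − 3B)/3. -/

import Mathlib

/-!
For `x ≠ w` the values of `x² + a/x` at `x` and `w` agree exactly when `x w (x + w) = a`, so a fibre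
is the set of roots of a cubic with root sum `0`, and counting ordered pairs in each fibre gives
`3 V = 3 (p - 1) - N`, where `N` is the number of points on the curve `x y (x + y) = a`. Putting
`r = 1 / (x + y)` and `u = (x - y) / (x + y)` turns this curve into `u² = 1 - 4 a r³` with `r ≠ 0`,
whence `N = p - 2 + S(4a)` for `S(c) = ∑ χ(1 - c r³)`.

The sum `S(c)` depends only on the class of `c ≠ 0` modulo cubes. Its first two moments over `c`,
together with `S(1)` even and `S(c) ≡ 1 (mod 3)`, force the values on the three classes to be `-2A`
and `A ± 3B` with `p = A² + 3B²`. The sign is decided by `S(c) ≡ c ^ ((p - 1) / 3) S(1) (mod p)`,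
which follows from Euler's criterion.
-/

open Finset

section Preliminaries

theorem sum_eq_apply_zero_add_sum_units {G₀ M : Type*} [GroupWithZero G₀] [Fintype G₀]
    [DecidableEq G₀] [AddCommMonoid M] (f : G₀ → M) :
    ∑ x, f x = f 0 + ∑ u : G₀ˣ, f u := by
  rw [← add_sum_erase univ f (mem_univ 0)]
  congr 1
  refine (sum_bij (fun (u : G₀ˣ) _ => (u : G₀)) (by simp) (fun _ _ _ _ => Units.ext) ?_
    (fun _ _ => rfl)).symm
  exact fun x hx => ⟨Units.mk0 x (ne_of_mem_erase hx), mem_univ _, rfl⟩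

theorem exists_eq_pow_mul_pow_of_isCyclic {G : Type*} [CommGroup G] [Finite G] [IsCyclic G] {l : ℕ}
    (hl : l.Prime) (hdvd : l ∣ Nat.card G) {g : G} (hg : g ^ (Nat.card G / l) ≠ 1) (x : G) :
    ∃ (t : G) (i : ℕ), x = t ^ l * g ^ i := by
  let H : Subgroup G := (powMonoidHom l).range
  have hcard : Nat.card (G ⧸ H) = l :=
    (IsCyclic.index_powMonoidHom_range G l).trans (Nat.gcd_eq_right hdvd)
  have hgH : (g : G ⧸ H) ≠ 1 := by
    rw [Ne, QuotientGroup.eq_one_iff]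
    rintro ⟨t, rfl⟩
    rw [powMonoidHom_apply, ← pow_mul, Nat.mul_div_cancel' hdvd] at hg
    exact hg pow_card_eq_one'
  have := Fact.mk hl
  obtain ⟨i, hi⟩ := mem_powers_of_prime_card hcard hgH (g' := (x : G ⧸ H))
  obtain ⟨t, ht⟩ := QuotientGroup.eq.mp hi
  refine ⟨t, i, ?_⟩
  rw [← powMonoidHom_apply, ht, mul_comm, mul_inv_cancel_left]

theorem exists_pow_eq_of_pow_eq_one_of_isCyclic {G : Type*} [Group G] [Finite G] [IsCyclic G]
    {n : ℕ} (hn : n ∣ Nat.card G) {x : G} (hx : x ^ (Nat.card G / n) = 1) : ∃ t : G, t ^ n = x := by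
  obtain ⟨g, hg⟩ := IsCyclic.exists_monoid_generator (α := G)
  obtain ⟨k, rfl⟩ := hg x
  have hdvd : n * (Nat.card G / n) ∣ k * (Nat.card G / n) :=
    calc n * (Nat.card G / n) ∣ orderOf g := by
          rw [Nat.mul_div_cancel' hn, orderOf_eq_card_of_forall_mem_powers hg]
      _ ∣ k * (Nat.card G / n) := orderOf_dvd_of_pow_eq_one ((pow_mul g k _).trans hx)
  have hpos : 0 < Nat.card G / n := Nat.div_pos_iff.mpr
    ⟨Nat.pos_of_dvd_of_pos hn Nat.card_pos, Nat.le_of_dvd Nat.card_pos hn⟩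
  obtain ⟨j, rfl⟩ := Nat.dvd_of_mul_dvd_mul_right hpos hdvd
  exact ⟨g ^ j, by rw [← pow_mul, mul_comm]⟩

theorem nsmul_sum_eq_card_nsmul_sum_range {G M : Type*} [CommGroup G] [Fintype G] [AddCommGroup M]
    {n : ℕ} {f : G → M} (hf : ∀ t x, f (t ^ n * x) = f x) {g : G}
    (hg : ∀ x, ∃ (t : G) (i : ℕ), x = t ^ n * g ^ i) :
    n • ∑ x, f x = Fintype.card G • ∑ i ∈ range n, f (g ^ i) := by
  have hshift (j : ℕ) : ∑ i ∈ range n, f (g ^ j * g ^ i) = ∑ i ∈ range n, f (g ^ i) := by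
    induction j with
    | zero => simp only [pow_zero, one_mul]
    | succ j ih =>
      rw [← ih]
      have hend : f (g ^ j * g ^ n) = f (g ^ j * g ^ 0) := by
        rw [mul_comm, hf, pow_zero, mul_one]
      have h := (sum_range_succ' (fun i => f (g ^ j * g ^ i)) n).symm.trans (sum_range_succ _ n)
      rw [hend, add_left_inj] at h
      simpa only [pow_succ', mul_assoc, mul_left_comm] using h
  have hconst (x : G) : ∑ i ∈ range n, f (x * g ^ i) = ∑ i ∈ range n, f (g ^ i) := by
    obtain ⟨t, j, rfl⟩ := hg x
    simp only [mul_assoc, hf, hshift]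
  have htranslate (i : ℕ) : ∑ x, f (x * g ^ i) = ∑ x, f x :=
    Equiv.sum_comp (Equiv.mulRight (g ^ i)) f
  calc n • ∑ x, f x = ∑ i ∈ range n, ∑ x, f (x * g ^ i) := by
        simp only [htranslate, sum_const, card_range]
    _ = Fintype.card G • ∑ i ∈ range n, f (g ^ i) := by
        rw [sum_comm]
        simp only [hconst, sum_const, card_univ]

theorem exists_isPrimitiveRoot_of_dvd_card_sub_one {F : Type*} [Field F] [Fintype F] {n : ℕ}
    (hn : n ∣ Fintype.card F - 1) : ∃ ζ : F, IsPrimitiveRoot ζ n := by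
  classical
  obtain ⟨g, hg⟩ := IsCyclic.exists_ofOrder_eq_natCard (α := Fˣ)
  rw [Nat.card_eq_fintype_card, Fintype.card_units] at hg
  obtain ⟨m, hm⟩ := hn
  have hpos : 0 < Fintype.card F - 1 := Nat.sub_pos_of_lt Fintype.one_lt_card
  exact ⟨_, IsPrimitiveRoot.coe_units_iff.mpr
    ((hg ▸ IsPrimitiveRoot.orderOf g).pow hpos (hm.trans (mul_comm n m)))⟩

theorem card_filter_pow_eq_pow {F : Type*} [Field F] [Fintype F] [DecidableEq F] {n : ℕ}
    (hn : n ∣ Fintype.card F - 1) {u : F} (hu : u ≠ 0) : #{r : F | r ^ n = u ^ n} = n := by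
  have hn0 : 0 < n := Nat.pos_of_dvd_of_pos hn (Nat.sub_pos_of_lt Fintype.one_lt_card)
  obtain ⟨ζ, hζ⟩ := exists_isPrimitiveRoot_of_dvd_card_sub_one hn
  have hcard := hζ.card_nthRoots (u ^ n)
  rw [if_pos ⟨u, rfl⟩,
    ← Multiset.toFinset_card_of_nodup (hζ.nthRoots_nodup (pow_ne_zero n hu))] at hcard
  refine Eq.trans (congrArg card ?_) hcard
  ext r
  simp [Polynomial.mem_nthRoots hn0]

theorem sum_pow_eq_ite {F : Type*} [Field F] [Fintype F] {i : ℕ} (hi : i ≠ 0) :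
    ∑ x : F, x ^ i = if Fintype.card F - 1 ∣ i then -1 else 0 := by
  classical
  rw [sum_eq_apply_zero_add_sum_units, zero_pow hi, zero_add, FiniteField.sum_pow_units]

theorem sq_eq_sq_of_prime_eq_sq_add_mul_sq {p d a b x y : ℤ} (hp : Prime p) (hd : 1 < d)
    (hab : p = a ^ 2 + d * b ^ 2) (hxy : p = x ^ 2 + d * y ^ 2) :
    a ^ 2 = x ^ 2 ∧ b ^ 2 = y ^ 2 := by
  have hpos : 0 < p := lt_of_le_of_ne (by rw [hab]; positivity) hp.ne_zero.symm
  have eq_zero_of_dvd {s t : ℤ} (hst : p ^ 2 = s ^ 2 + d * t ^ 2) (ht : p ∣ t) : t = 0 := by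
    refine Int.eq_zero_of_abs_lt_dvd ht (abs_lt_of_sq_lt_sq ?_ hpos.le)
    nlinarith [sq_nonneg s, sq_nonneg t, mul_pos hpos hpos]
  have hdvd : p ∣ (a * y - x * b) * (a * y + x * b) :=
    ⟨y ^ 2 - b ^ 2, by linear_combination -y ^ 2 * hab + b ^ 2 * hxy⟩
  have hprod : a ^ 2 * y ^ 2 = x ^ 2 * b ^ 2 := by
    have hsq : p ^ 2 = (a ^ 2 + d * b ^ 2) * (x ^ 2 + d * y ^ 2) := by rw [← hab, ← hxy, sq]
    rcases hp.dvd_or_dvd hdvd with h | h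
    · have := eq_zero_of_dvd (s := a * x + d * b * y) (hsq.trans (by ring)) h
      linear_combination (a * y + x * b) * this
    · have := eq_zero_of_dvd (s := a * x - d * b * y) (hsq.trans (by ring)) h
      linear_combination (a * y - x * b) * this
  have hb : b ^ 2 = y ^ 2 := by
    apply mul_left_cancel₀ hpos.ne'
    linear_combination b ^ 2 * hxy - y ^ 2 * hab - hprod
  exact ⟨by linear_combination hxy - hab - d * hb, hb⟩

end Preliminaries

section CubicCharSum

variable {F : Type*} [Field F] [Fintype F] [DecidableEq F]

theorem sum_quadraticChar_mul_add (hF : ringChar F ≠ 2) (m n : F) :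
    ∑ x, quadraticChar F (m * x + n) =
      if m = 0 then (Fintype.card F : ℤ) * quadraticChar F n else 0 := by
  split_ifs with hm
  · simp [hm]
  · rw [← quadraticChar_sum_zero hF]
    exact Equiv.sum_comp ((Equiv.mulLeft₀ m hm).trans (Equiv.addRight n)) (quadraticChar F)

theorem sum_quadraticChar_one_sub_mul (hF : ringChar F ≠ 2) (u : F) :
    ∑ c, quadraticChar F (1 - c * u) = if u = 0 then (Fintype.card F : ℤ) else 0 := by
  have haffine := sum_quadraticChar_mul_add hF (-u) 1
  simp only [neg_eq_zero, map_one, mul_one] at haffine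
  rw [← haffine]
  exact sum_congr rfl fun c _ => by ring_nf

theorem sum_quadraticChar_one_sub_mul_one_sub (hF : ringChar F ≠ 2) (u v : F) :
    ∑ c, quadraticChar F (1 - c * u) * quadraticChar F (1 - c * v) =
      (if u = v then (Fintype.card F : ℤ) else 0) - quadraticChar F (u * v) := by
  rcases eq_or_ne u 0 with rfl | hu
  · simp only [mul_zero, sub_zero, zero_mul, map_one, one_mul, MulChar.map_zero,
      sum_quadraticChar_one_sub_mul hF, eq_comm]
  -- The substitution `d = (1 - c * u)⁻¹` turns the quadratic argument into the affine one below;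
  -- the correction term accounts for `c = u⁻¹`.
  have hterm (c : F) : quadraticChar F (1 - c * u) * quadraticChar F (1 - c * v) =
      quadraticChar F ((u - v) / u * (1 - c * u)⁻¹ + v / u) -
        if 1 - c * u = 0 then quadraticChar F (v / u) else 0 := by
    split_ifs with hc
    · simp [hc]
    · have hsplit : (1 - c * u) * (1 - c * v) =
          ((u - v) / u * (1 - c * u)⁻¹ + v / u) * (1 - c * u) ^ 2 := by
        field_simp
        ring
      rw [← map_mul, hsplit, map_mul, quadraticChar_sq_one' hc, mul_one, sub_zero]
  let e : F ≃ F := (Equiv.mulRight₀ u hu).trans (Equiv.subLeft 1)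
  have hratio : quadraticChar F (v / u) = quadraticChar F (u * v) := by
    rw [show u * v = v / u * u ^ 2 by field_simp, map_mul, quadraticChar_sq_one' hu, mul_one]
  calc _ = ∑ c, quadraticChar F ((u - v) / u * (e c)⁻¹ + v / u) -
        ∑ c, (if e c = 0 then quadraticChar F (v / u) else 0) := by
        rw [← sum_sub_distrib]
        exact sum_congr rfl fun c _ => hterm c
    _ = ∑ x, quadraticChar F ((u - v) / u * x + v / u) -
        ∑ x : F, (if x = 0 then quadraticChar F (v / u) else 0) := by
        rw [← Equiv.sum_comp (e.trans (Equiv.inv F)) fun x =>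
          quadraticChar F ((u - v) / u * x + v / u),
          ← Equiv.sum_comp e fun x => if x = 0 then quadraticChar F (v / u) else 0]
        rfl
    _ = _ := by
        rw [sum_quadraticChar_mul_add hF, sum_ite_eq' univ (0 : F), hratio, ← hratio]
        rcases eq_or_ne u v with rfl | huv
        · simp [hu]
        · simp [hu, huv, sub_eq_zero]

/-- The sum `∑ χ(1 - c r³)` over `r` in `F`, where `χ` is the quadratic character. When `F` has odd
characteristic, the affine curve `u² = 1 - c r³` has `#F + cubicCharSum c` points. -/
noncomputable def cubicCharSum (c : F) : ℤ := ∑ r : F, quadraticChar F (1 - c * r ^ 3)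

theorem cubicCharSum_zero : cubicCharSum (0 : F) = Fintype.card F := by
  simp [cubicCharSum]

theorem cubicCharSum_pow_three_mul {t : F} (ht : t ≠ 0) (c : F) :
    cubicCharSum (t ^ 3 * c) = cubicCharSum c := by
  refine Fintype.sum_equiv (Equiv.mulLeft₀ t ht) _ _ fun r => ?_
  rw [Equiv.mulLeft₀_apply, mul_pow, mul_left_comm, mul_assoc]

theorem sum_cubicCharSum (hF : ringChar F ≠ 2) :
    ∑ c : F, cubicCharSum c = Fintype.card F := by
  simp only [cubicCharSum]
  rw [sum_comm]
  simp only [sum_quadraticChar_one_sub_mul hF, pow_eq_zero_iff three_ne_zero, sum_ite_eq', mem_univ,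
    if_true]

theorem card_filter_pow_three_eq_pow_three (hq : Fintype.card F % 3 = 1) (u : F) :
    #{r : F | r ^ 3 = u ^ 3} = if u = 0 then 1 else 3 := by
  split_ifs with hu
  · simp [hu, filter_eq']
  · exact card_filter_pow_eq_pow (by omega) hu

theorem sum_cubicCharSum_sq (hF : ringChar F ≠ 2) (hq : Fintype.card F % 3 = 1) :
    ∑ c : F, cubicCharSum c ^ 2 = Fintype.card F * (3 * Fintype.card F - 2 : ℤ) := by
  have hcube (x : F) : quadraticChar F (x ^ 3) = quadraticChar F x := by
    rcases eq_or_ne x 0 with rfl | hx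
    · simp
    · rw [pow_succ, map_mul, quadraticChar_sq_one' hx, one_mul]
  have hcross : ∑ r : F, ∑ s : F, quadraticChar F (r ^ 3 * s ^ 3) = 0 := by
    simp only [map_mul, hcube, ← mul_sum, quadraticChar_sum_zero hF, mul_zero, sum_const_zero]
  have hdiag : ∑ r : F, ∑ s : F, (if r ^ 3 = s ^ 3 then (Fintype.card F : ℤ) else 0) =
      Fintype.card F * (3 * Fintype.card F - 2 : ℤ) := by
    have hcount : ∑ r : F, ((if r = 0 then 1 else 3 : ℕ) : ℤ) = 3 * Fintype.card F - 2 := by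
      have hsplit (r : F) : ((if r = 0 then 1 else 3 : ℕ) : ℤ) = 3 - if r = 0 then 2 else 0 := by
        split_ifs <;> rfl
      simp [hsplit, sum_sub_distrib, mul_comm]
    have hfiber (r : F) : ∑ s : F, (if r ^ 3 = s ^ 3 then (Fintype.card F : ℤ) else 0) =
        ((if r = 0 then 1 else 3 : ℕ) : ℤ) * Fintype.card F := by
      rw [← card_filter_pow_three_eq_pow_three hq r, ← sum_filter, sum_const, nsmul_eq_mul]
      simp only [eq_comm]
    simp only [hfiber]
    rw [← sum_mul, hcount, mul_comm]
  calc ∑ c : F, cubicCharSum c ^ 2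
      = ∑ r : F, ∑ s : F, ∑ c : F,
          quadraticChar F (1 - c * r ^ 3) * quadraticChar F (1 - c * s ^ 3) := by
        simp only [cubicCharSum, sq, sum_mul_sum]
        rw [sum_comm]
        exact sum_congr rfl fun r _ => sum_comm
    _ = Fintype.card F * (3 * Fintype.card F - 2 : ℤ) := by
        simp only [sum_quadraticChar_one_sub_mul_one_sub hF, sum_sub_distrib, hcross, sub_zero,
          hdiag]

theorem cubicCharSum_modEq_one (hq : Fintype.card F % 3 = 1) (c : F) :
    cubicCharSum c ≡ 1 [ZMOD 3] := by
  have hzero : (0 : F) ∈ univ.image (fun r : F => r ^ 3) := mem_image.mpr ⟨0, by simp⟩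
  rw [cubicCharSum, sum_comp (fun v => quadraticChar F (1 - c * v)) (fun r : F => r ^ 3),
    ← add_sum_erase _ _ hzero]
  have hrest : (3 : ℤ) ∣ ∑ v ∈ (univ.image fun r : F => r ^ 3).erase 0,
      #{r : F | r ^ 3 = v} • quadraticChar F (1 - c * v) := by
    refine dvd_sum fun v hv => ?_
    obtain ⟨hv0, u, -, rfl⟩ := by simpa only [mem_erase, mem_image] using hv
    rw [card_filter_pow_three_eq_pow_three hq, if_neg (ne_zero_pow three_ne_zero hv0)]
    exact ⟨_, nsmul_eq_mul _ _⟩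
  have hone : #{r : F | r ^ 3 = 0} • quadraticChar F (1 - c * 0) = 1 := by
    simp [filter_eq']
  rw [hone]
  simpa using (Int.modEq_zero_iff_dvd.mpr hrest).add_left 1

theorem even_cubicCharSum_one (hF : ringChar F ≠ 2) (hq : Fintype.card F % 3 = 1) :
    Even (cubicCharSum (1 : F)) := by
  have hparity (x : F) : Even (quadraticChar F x + 1 + if x = 0 then 1 else 0) := by
    split_ifs with hx
    · simp [hx]
    · rcases quadraticChar_dichotomy hx with h | h <;> simp [h]
  have hroots : #{r : F | 1 - 1 * r ^ 3 = 0} = 3 := by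
    have h := card_filter_pow_three_eq_pow_three hq (1 : F)
    rw [if_neg one_ne_zero] at h
    simpa only [one_mul, one_pow, sub_eq_zero, eq_comm (a := (1 : F))] using h
  have hsum : Even (∑ r : F, (quadraticChar F (1 - 1 * r ^ 3) + 1 +
      if 1 - 1 * r ^ 3 = 0 then 1 else 0)) := even_sum _ fun r _ => hparity _
  rw [sum_add_distrib, sum_add_distrib, ← cubicCharSum, ← sum_filter, sum_const, sum_const, hroots,
    card_univ, nsmul_one, nsmul_one] at hsum
  have hodd : Fintype.card F % 2 = 1 := FiniteField.odd_card_of_char_ne_two hF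
  rw [Int.even_iff] at hsum ⊢
  lia

theorem cast_cubicCharSum (hF : ringChar F ≠ 2) (hq : Fintype.card F % 3 = 1) (c : F) :
    (cubicCharSum c : F) = -(-c) ^ ((Fintype.card F - 1) / 3) *
      (Fintype.card F / 2).choose ((Fintype.card F - 1) / 3) := by
  set q := Fintype.card F
  have hodd : q % 2 = 1 := FiniteField.odd_card_of_char_ne_two hF
  have hone : 1 < q := Fintype.one_lt_card
  have hpow (j : ℕ) (hj : j ∈ range (q / 2 + 1)) (hne : j ≠ (q - 1) / 3) :
      ∑ r : F, r ^ (3 * j) = 0 := by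
    rcases eq_or_ne j 0 with rfl | hj0
    · exact FiniteField.sum_pow_lt_card_sub_one F 0 (by lia)
    rw [sum_pow_eq_ite (by lia), if_neg]
    rintro ⟨m, hm⟩
    have hlt : (q - 1) * m < (q - 1) * 2 := by
      rw [← hm]
      have := mem_range.mp hj
      lia
    have hm2 : m < 2 := lt_of_mul_lt_mul_left hlt (Nat.zero_le _)
    interval_cases m <;> lia
  calc (cubicCharSum c : F)
      = ∑ r : F, ∑ j ∈ range (q / 2 + 1), (-c * r ^ 3) ^ j * (q / 2).choose j := by
        simp only [cubicCharSum, Int.cast_sum, quadraticChar_eq_pow_of_char_ne_two' hF]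
        refine sum_congr rfl fun r _ => ?_
        rw [show 1 - c * r ^ 3 = -c * r ^ 3 + 1 by ring, add_pow]
        simp only [one_pow, mul_one]
        rfl
    _ = ∑ j ∈ range (q / 2 + 1), (-c) ^ j * (q / 2).choose j * ∑ r : F, r ^ (3 * j) := by
        rw [sum_comm]
        simp only [mul_sum, mul_pow, pow_mul, mul_right_comm]
    _ = (-c) ^ ((q - 1) / 3) * (q / 2).choose ((q - 1) / 3) *
          ∑ r : F, r ^ (3 * ((q - 1) / 3)) := by
        refine sum_eq_single _ (fun j hj hne => ?_) fun hk => absurd (mem_range.mpr (by lia)) hk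
        rw [hpow j hj hne, mul_zero]
    _ = _ := by
        rw [Nat.mul_div_cancel' (by lia), sum_pow_eq_ite (by lia), if_pos dvd_rfl]
        ring

theorem cast_cubicCharSum_eq_pow_mul (hF : ringChar F ≠ 2) (hq : Fintype.card F % 3 = 1) (c : F) :
    (cubicCharSum c : F) = c ^ ((Fintype.card F - 1) / 3) * cubicCharSum (1 : F) := by
  rw [cast_cubicCharSum hF hq, cast_cubicCharSum hF hq, neg_pow c]
  ring

end CubicCharSum

section CubicCharSumEvaluation

theorem exists_eq_sq_add_three_mul_sq_of_moments {q s₀ s₁ s₂ : ℤ} (hsum : s₀ + s₁ + s₂ = 0)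
    (hsq : s₀ ^ 2 + s₁ ^ 2 + s₂ ^ 2 = 6 * q) (heven : Even s₀) (h₀ : s₀ ≡ 1 [ZMOD 3])
    (h₁ : s₁ ≡ 1 [ZMOD 3]) :
    ∃ A B : ℤ, A % 3 = 1 ∧ q = A ^ 2 + 3 * B ^ 2 ∧ s₀ = -2 * A ∧ s₁ = A + 3 * B := by
  rw [Int.even_iff] at heven
  rw [Int.ModEq] at h₀ h₁
  obtain ⟨A, hA⟩ : ∃ A, s₀ = -2 * A := ⟨-(s₀ / 2), by lia⟩
  obtain ⟨B, hB⟩ : ∃ B, s₁ = A + 3 * B := ⟨(s₁ - A) / 3, by lia⟩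
  obtain rfl : s₂ = A - 3 * B := by lia
  subst hA hB
  exact ⟨A, B, by lia, by linarith, rfl, rfl⟩

section FiniteField

variable {F : Type*} [Field F] [Fintype F] [DecidableEq F]

theorem cubicCharSum_eq_cubicCharSum_one (hq : Fintype.card F % 3 = 1) {c : F}
    (hc : c ^ ((Fintype.card F - 1) / 3) = 1) : cubicCharSum c = cubicCharSum (1 : F) := by
  have hone : 1 < Fintype.card F := Fintype.one_lt_card
  have hunits : Nat.card Fˣ = Fintype.card F - 1 := by
    rw [Nat.card_eq_fintype_card, Fintype.card_units]
  have hc0 : c ≠ 0 := by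
    rintro rfl
    exact zero_ne_one ((zero_pow (by lia)).symm.trans hc)
  obtain ⟨t, ht⟩ := exists_pow_eq_of_pow_eq_one_of_isCyclic (n := 3) (x := Units.mk0 c hc0)
    (by lia) (by rw [hunits]; ext; simpa using hc)
  have htc : (t : F) ^ 3 * 1 = c := by simpa using congrArg Units.val ht
  rw [← htc, cubicCharSum_pow_three_mul t.ne_zero]

theorem three_mul_sum_units_comp_cubicCharSum (hq : Fintype.card F % 3 = 1) {g : Fˣ}
    (hg : g ^ ((Fintype.card F - 1) / 3) ≠ 1) (φ : ℤ → ℤ) :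
    3 * ∑ u : Fˣ, φ (cubicCharSum (u : F)) =
      (Fintype.card F - 1) * ∑ i ∈ range 3, φ (cubicCharSum ((g : F) ^ i)) := by
  have hunits : Nat.card Fˣ = Fintype.card F - 1 := by
    rw [Nat.card_eq_fintype_card, Fintype.card_units]
  have hcosets := exists_eq_pow_mul_pow_of_isCyclic Nat.prime_three (by lia) (hunits ▸ hg)
  have h := nsmul_sum_eq_card_nsmul_sum_range (f := fun u : Fˣ => φ (cubicCharSum (u : F)))
    (fun t x => by simp [cubicCharSum_pow_three_mul]) hcosets
  simpa [Fintype.card_units, Nat.cast_sub Fintype.card_pos] using h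

theorem exists_cubicCharSum_eq (hF : ringChar F ≠ 2) (hq : Fintype.card F % 3 = 1) {c : F}
    (hc0 : c ≠ 0) (hc : c ^ ((Fintype.card F - 1) / 3) ≠ 1) :
    ∃ A B : ℤ, A % 3 = 1 ∧ Fintype.card F = A ^ 2 + 3 * B ^ 2 ∧
      cubicCharSum (1 : F) = -2 * A ∧ cubicCharSum c = A + 3 * B := by
  have hclass := three_mul_sum_units_comp_cubicCharSum hq (g := Units.mk0 c hc0)
    (fun h => hc (by simpa using congrArg Units.val h))
  have hpos : (0 : ℤ) < Fintype.card F - 1 := by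
    have : 1 < Fintype.card F := Fintype.one_lt_card
    lia
  have hfirst := hclass id
  have hsecond := hclass (· ^ 2)
  simp only [id, sum_range_succ, sum_range_zero, zero_add, pow_zero, pow_one, Units.val_mk0]
    at hfirst hsecond
  have hmoment := sum_cubicCharSum hF
  have hmoment_sq := sum_cubicCharSum_sq hF hq
  rw [sum_eq_apply_zero_add_sum_units, cubicCharSum_zero] at hmoment hmoment_sq
  refine exists_eq_sq_add_three_mul_sq_of_moments (s₂ := cubicCharSum (c ^ 2)) ?_ ?_
    (even_cubicCharSum_one hF hq) (cubicCharSum_modEq_one hq 1) (cubicCharSum_modEq_one hq c)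
  · apply mul_left_cancel₀ hpos.ne'
    linear_combination 3 * hmoment - hfirst
  · apply mul_left_cancel₀ hpos.ne'
    linear_combination 3 * hmoment_sq - hsecond

end FiniteField

section ZMod

variable {p : ℕ} [Fact p.Prime] {A B : ℤ}

theorem ringChar_zmod_ne_two_of_mod_three (hp1 : p % 3 = 1) : ringChar (ZMod p) ≠ 2 := by
  rw [ZMod.ringChar_zmod_n]
  lia

theorem three_ne_zero_of_mod_three (hp1 : p % 3 = 1) : (3 : ZMod p) ≠ 0 := by
  have hndvd : ¬ p ∣ 3 := fun h => by
    have := (Nat.prime_dvd_prime_iff_eq Fact.out Nat.prime_three).mp h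
    lia
  exact_mod_cast mt (ZMod.natCast_eq_zero_iff 3 p).mp hndvd

theorem intCast_mul_inv_sq_eq_neg_three (hpAB : (p : ℤ) = A ^ 2 + 3 * B ^ 2) :
    ((A : ZMod p) * (B : ZMod p)⁻¹) ^ 2 = -3 := by
  have hnorm : (A : ZMod p) ^ 2 + 3 * (B : ZMod p) ^ 2 = 0 := by
    simpa using (congrArg (Int.cast : ℤ → ZMod p) hpAB).symm
  have hB : (B : ZMod p) ≠ 0 := by
    intro hB
    have hA : (A : ZMod p) = 0 := by simpa [hB] using hnorm
    obtain ⟨x, rfl⟩ := (ZMod.intCast_zmod_eq_zero_iff_dvd A p).mp hA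
    obtain ⟨y, rfl⟩ := (ZMod.intCast_zmod_eq_zero_iff_dvd B p).mp hB
    have hprime := Nat.prime_iff_prime_int.mp (Fact.out : p.Prime)
    refine hprime.not_isUnit (IsUnit.of_mul_eq_one (x ^ 2 + 3 * y ^ 2) ?_)
    apply mul_left_cancel₀ hprime.ne_zero
    linear_combination -hpAB
  field_simp
  linear_combination hnorm

theorem cubicCharSum_one_eq_and_eq_or_eq (hp1 : p % 3 = 1)
    (hpAB : (p : ℤ) = A ^ 2 + 3 * B ^ 2) (hA : A % 3 = 1) {c : ZMod p} (hc0 : c ≠ 0)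
    (hc : c ^ ((p - 1) / 3) ≠ 1) :
    cubicCharSum (1 : ZMod p) = -2 * A ∧
      (cubicCharSum c = A + 3 * B ∨ cubicCharSum c = A - 3 * B) := by
  obtain ⟨A', B', hA', hpAB', hone, hc'⟩ := exists_cubicCharSum_eq
    (ringChar_zmod_ne_two_of_mod_three hp1) (by rwa [ZMod.card]) hc0 (by rwa [ZMod.card])
  rw [ZMod.card] at hpAB'
  obtain ⟨hAsq, hBsq⟩ := sq_eq_sq_of_prime_eq_sq_add_mul_sq
    (Nat.prime_iff_prime_int.mp (Fact.out : p.Prime)) (by norm_num) hpAB hpAB'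
  obtain rfl : A' = A := by
    rcases sq_eq_sq_iff_eq_or_eq_neg.mp hAsq with h | h <;> lia
  rcases sq_eq_sq_iff_eq_or_eq_neg.mp hBsq with rfl | rfl
  · exact ⟨hone, .inl hc'⟩
  · exact ⟨hone, .inr (by lia)⟩

theorem cubicCharSum_one_eq (hp1 : p % 3 = 1) (hpAB : (p : ℤ) = A ^ 2 + 3 * B ^ 2)
    (hA : A % 3 = 1) : cubicCharSum (1 : ZMod p) = -2 * A := by
  have hcard : Nat.card (ZMod p)ˣ = p - 1 := by
    rw [Nat.card_eq_fintype_card, ZMod.card_units]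
  have hone : 1 < p := (Fact.out : p.Prime).one_lt
  obtain ⟨g, hg⟩ := exists_pow_ne_one_of_isCyclic (G := (ZMod p)ˣ) (k := (p - 1) / 3) (by lia)
    (by lia)
  exact (cubicCharSum_one_eq_and_eq_or_eq hp1 hpAB hA g.ne_zero
    (fun h => hg (Units.ext (by simpa using h)))).1

theorem cubicCharSum_eq_of_pow_eq_one (hp1 : p % 3 = 1) (hpAB : (p : ℤ) = A ^ 2 + 3 * B ^ 2)
    (hA : A % 3 = 1) {c : ZMod p} (hc : c ^ ((p - 1) / 3) = 1) : cubicCharSum c = -2 * A := by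
  rw [cubicCharSum_eq_cubicCharSum_one (by rwa [ZMod.card]) (by rwa [ZMod.card]),
    cubicCharSum_one_eq hp1 hpAB hA]

theorem cubicCharSum_eq_of_pow_eq (hp1 : p % 3 = 1) (hpAB : (p : ℤ) = A ^ 2 + 3 * B ^ 2)
    (hA : A % 3 = 1) {c : ZMod p}
    (hc : c ^ ((p - 1) / 3) = (-1 + (A : ZMod p) * (B : ZMod p)⁻¹) / 2) :
    cubicCharSum c = A + 3 * B := by
  have h2 : (2 : ZMod p) ≠ 0 := Ring.two_ne_zero (ringChar_zmod_ne_two_of_mod_three hp1)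
  have h3 : (3 : ZMod p) ≠ 0 := three_ne_zero_of_mod_three hp1
  have hI := intCast_mul_inv_sq_eq_neg_three hpAB
  have hB : (B : ZMod p) ≠ 0 := fun hB => h3 (by simpa [hB] using hI)
  obtain ⟨ω, hω⟩ : ∃ ω, ω = c ^ ((p - 1) / 3) := ⟨_, rfl⟩
  have hω2 : 2 * ω + 1 = A * (B : ZMod p)⁻¹ := by
    rw [hω, hc]
    field_simp
    ring
  have hω_root : ω ^ 2 + ω + 1 = 0 := by
    apply mul_left_cancel₀ (pow_ne_zero 2 h2)
    linear_combination (2 * ω + 1 + A * (B : ZMod p)⁻¹) * hω2 + hI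
  have hω1 : ω ≠ 1 := fun h => h3 (by rw [h] at hω_root; linear_combination hω_root)
  have hc0 : c ≠ 0 := by
    rintro rfl
    have hone : 1 < p := (Fact.out : p.Prime).one_lt
    rw [zero_pow (by lia)] at hω
    simp [hω] at hω_root
  obtain ⟨hone, h | h⟩ := cubicCharSum_one_eq_and_eq_or_eq hp1 hpAB hA hc0 (hω ▸ hω1)
  · exact h
  -- Euler's criterion gives `S(c) ≡ -2 A ω = A + 3 B`, which excludes the other sign.
  have hcast := cast_cubicCharSum_eq_pow_mul (ringChar_zmod_ne_two_of_mod_three hp1)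
    (by rwa [ZMod.card]) c
  rw [ZMod.card, ← hω, hone, h] at hcast
  push_cast at hcast
  have hAB : (2 * ω + 1) * B = A := by rw [hω2, inv_mul_cancel_right₀ hB]
  have hzero : (2 : ZMod p) * 3 * B = 0 := by
    linear_combination 4 * B * hω_root - hcast - (1 + 2 * ω) * hAB
  exact absurd hzero (mul_ne_zero (mul_ne_zero h2 h3) hB)

end ZMod

end CubicCharSumEvaluation

section ValueSet

variable {F : Type*} [Field F]

/-- The rational function `x² + a/x` whose values are counted; as `a / 0 = 0`, its value at `0` is
junk, and `0` is excluded from the domain below. -/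
def sqAddDiv (a x : F) : F := x ^ 2 + a / x

theorem sqAddDiv_eq_sqAddDiv_iff (a : F) {x w : F} (hx : x ≠ 0) (hw : w ≠ 0) :
    sqAddDiv a w = sqAddDiv a x ↔ w = x ∨ x * w * (x + w) = a := by
  have hfactor : sqAddDiv a w - sqAddDiv a x = (w - x) * (x * w * (x + w) - a) / (x * w) := by
    simp only [sqAddDiv]
    field_simp
    ring
  rw [← sub_eq_zero, hfactor, div_eq_zero_iff, or_iff_left (mul_ne_zero hx hw), mul_eq_zero,
    sub_eq_zero, sub_eq_zero]

theorem sqAddDiv_eq_iff (a b : F) {x : F} (hx : x ≠ 0) : sqAddDiv a x = b ↔ x ^ 3 + a = b * x := by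
  rw [sqAddDiv]
  field_simp

theorem mul_mul_add_eq_iff {a x y z : F} (ha : a ≠ 0) (hsum : x + y + z = 0)
    (hprod : x * y * z = -a) (w : F) : x * w * (x + w) = a ↔ w = y ∨ w = z := by
  have hx : x ≠ 0 := by
    rintro rfl
    exact ha (by simpa using hprod.symm)
  have hfactor : x * w * (x + w) - a = x * ((w - y) * (w - z)) := by
    linear_combination x * w * hsum - hprod
  rw [← sub_eq_zero, hfactor, mul_eq_zero, or_iff_right hx, mul_eq_zero, sub_eq_zero, sub_eq_zero]

theorem ne_zero_and_sqAddDiv_eq_iff {a x y z : F} (ha : a ≠ 0) (hsum : x + y + z = 0)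
    (hprod : x * y * z = -a) (w : F) :
    w ≠ 0 ∧ sqAddDiv a w = sqAddDiv a x ↔ w = x ∨ w = y ∨ w = z := by
  have hx : x ≠ 0 := by
    rintro rfl
    exact ha (by simpa using hprod.symm)
  rw [← mul_mul_add_eq_iff ha hsum hprod]
  refine ⟨fun ⟨hw, h⟩ => (sqAddDiv_eq_sqAddDiv_iff a hx hw).mp h, fun h => ?_⟩
  have hw : w ≠ 0 := by
    rintro rfl
    rcases h with h | h
    · exact hx h.symm
    · exact ha (by simpa using h.symm)
  exact ⟨hw, (sqAddDiv_eq_sqAddDiv_iff a hx hw).mpr h⟩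

theorem card_pairs_add_three_eq_three_mul_card {α : Type*} [DecidableEq α] {x y z : α}
    (h : ¬(x = y ∧ y = z)) :
    #{(x, y), (x, z), (y, x), (y, z), (z, x), (z, y)} + 3 = 3 * #{x, y, z} := by
  by_cases hxy : x = y
  · subst hxy
    have hxz : x ≠ z := fun hxz => h ⟨rfl, hxz⟩
    simp [hxz, hxz.symm]
  · by_cases hyz : y = z
    · subst hyz
      simp [hxy, Ne.symm hxy]
    · by_cases hxz : x = z
      · subst hxz
        simp [hxy, Ne.symm hxy]
      · simp [hxy, hyz, hxz, Ne.symm hxy, Ne.symm hyz, Ne.symm hxz]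

variable [Fintype F] [DecidableEq F]

theorem filter_mul_mul_add_eq_and_sqAddDiv_eq {a x y z : F} (ha : a ≠ 0)
    (hsum : x + y + z = 0) (hprod : x * y * z = -a) :
    ({w | w.1 * w.2 * (w.1 + w.2) = a ∧ sqAddDiv a w.1 = sqAddDiv a x} : Finset (F × F)) =
      {(x, y), (x, z), (y, x), (y, z), (z, x), (z, y)} := by
  ext ⟨u, v⟩
  have hfst : u * v * (u + v) = a ∧ sqAddDiv a u = sqAddDiv a x ↔
      (u = x ∨ u = y ∨ u = z) ∧ u * v * (u + v) = a := by
    rw [← ne_zero_and_sqAddDiv_eq_iff ha hsum hprod, and_comm (b := u * v * (u + v) = a)]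
    refine and_congr_right fun huv => (and_iff_right ?_).symm
    rintro rfl
    exact ha (by simpa using huv.symm)
  have hx : u = x ∧ u * v * (u + v) = a ↔ u = x ∧ (v = y ∨ v = z) :=
    and_congr_right fun h => h ▸ mul_mul_add_eq_iff ha hsum hprod v
  have hy : u = y ∧ u * v * (u + v) = a ↔ u = y ∧ (v = x ∨ v = z) :=
    and_congr_right fun h => h ▸ mul_mul_add_eq_iff ha (by linear_combination hsum)
      (by linear_combination hprod) v
  have hz : u = z ∧ u * v * (u + v) = a ↔ u = z ∧ (v = x ∨ v = y) :=
    and_congr_right fun h => h ▸ mul_mul_add_eq_iff ha (by linear_combination hsum)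
      (by linear_combination hprod) v
  simp only [mem_filter, mem_univ, true_and, hfst, or_and_right, hx, hy, hz, and_or_left, or_assoc,
    mem_insert, mem_singleton, Prod.mk.injEq]

theorem card_filter_sqAddDiv_eq_add_three (h3 : (3 : F) ≠ 0) {a x : F} (ha : a ≠ 0) (hx : x ≠ 0) :
    #{w : F × F | w.1 * w.2 * (w.1 + w.2) = a ∧ sqAddDiv a w.1 = sqAddDiv a x} + 3 =
      3 * #{w : F | w ≠ 0 ∧ sqAddDiv a w = sqAddDiv a x} := by
  by_cases hex : ∃ y, x * y * (x + y) = a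
  · obtain ⟨y, hy⟩ := hex
    obtain ⟨z, hz⟩ : ∃ z, z = -(x + y) := ⟨_, rfl⟩
    have hsum : x + y + z = 0 := by rw [hz, add_neg_cancel]
    have hprod : x * y * z = -a := by rw [hz, mul_neg, hy]
    have hne : ¬(x = y ∧ y = z) := by
      rintro ⟨rfl, rfl⟩
      exact hx ((mul_eq_zero.mp (by linear_combination hsum : 3 * x = 0)).resolve_left h3)
    rw [filter_mul_mul_add_eq_and_sqAddDiv_eq ha hsum hprod,
      card_pairs_add_three_eq_three_mul_card hne]
    congr 2
    ext w
    simp [ne_zero_and_sqAddDiv_eq_iff ha hsum hprod]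
  · have hfiber (w : F) (hw : w ≠ 0) : sqAddDiv a w = sqAddDiv a x ↔ w = x := by
      rw [sqAddDiv_eq_sqAddDiv_iff a hx hw, or_iff_left fun h => hex ⟨w, h⟩]
    have hpairs : #{w : F × F | w.1 * w.2 * (w.1 + w.2) = a ∧
        sqAddDiv a w.1 = sqAddDiv a x} = 0 := by
      rw [card_eq_zero, filter_eq_empty_iff]
      rintro ⟨u, v⟩ - ⟨huv, h⟩
      have hu : u ≠ 0 := by
        rintro rfl
        simp [ha.symm] at huv
      obtain rfl := (hfiber u hu).mp h
      exact hex ⟨v, huv⟩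
    have hsingle : #{w : F | w ≠ 0 ∧ sqAddDiv a w = sqAddDiv a x} = 1 := by
      refine card_eq_one.mpr ⟨x, ?_⟩
      ext w
      simp only [mem_filter, mem_univ, true_and, mem_singleton]
      exact ⟨fun ⟨hw, h⟩ => (hfiber w hw).mp h, by rintro rfl; exact ⟨hx, rfl⟩⟩
    rw [hpairs, hsingle]

theorem card_mul_mul_add_eq_add_three_mul_card_image (h3 : (3 : F) ≠ 0) {a : F} (ha : a ≠ 0) :
    #{z : F × F | z.1 * z.2 * (z.1 + z.2) = a} + 3 * #((univ.erase 0).image (sqAddDiv a)) =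
      3 * (Fintype.card F - 1) := by
  have hmaps_pairs : Set.MapsTo (fun z : F × F => sqAddDiv a z.1)
      ({z | z.1 * z.2 * (z.1 + z.2) = a} : Finset (F × F)) ((univ.erase 0).image (sqAddDiv a)) := by
    rintro ⟨x, y⟩ h
    refine mem_coe.mpr (mem_image_of_mem _ (mem_erase.mpr ⟨?_, mem_univ _⟩))
    rintro (rfl : x = 0)
    exact ha (by simpa [eq_comm] using h)
  rw [card_eq_sum_card_fiberwise hmaps_pairs, mul_comm, ← smul_eq_mul, ← sum_const,
    ← sum_add_distrib, ← card_univ, ← card_erase_of_mem (mem_univ (0 : F)),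
    card_eq_sum_card_image (sqAddDiv a) (univ.erase 0), mul_sum]
  refine sum_congr rfl fun b hb => ?_
  obtain ⟨x, hx, rfl⟩ := mem_image.mp hb
  rw [filter_filter, card_filter_sqAddDiv_eq_add_three h3 ha (ne_of_mem_erase hx)]
  congr 2
  ext w
  simp

theorem card_mul_mul_add_eq_eq_card_sq_eq (h2 : (2 : F) ≠ 0) {a : F} (ha : a ≠ 0) :
    #{z : F × F | z.1 * z.2 * (z.1 + z.2) = a} =
      #{w : F × F | w.1 ≠ 0 ∧ w.2 ^ 2 = 1 - 4 * a * w.1 ^ 3} := by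
  have hadd {x y : F} (h : x * y * (x + y) = a) : x + y ≠ 0 := by
    intro h0
    exact ha (by simpa [h0, eq_comm] using h)
  have hinv {r : F} (u : F) (hr : r ≠ 0) :
      (1 + u) / (2 * r) + (1 - u) / (2 * r) = r⁻¹ := by
    field_simp
    ring
  refine card_bij' (fun z _ => ((z.1 + z.2)⁻¹, (z.1 - z.2) / (z.1 + z.2)))
    (fun w _ => ((1 + w.2) / (2 * w.1), (1 - w.2) / (2 * w.1))) ?_ ?_ ?_ ?_
  · rintro ⟨x, y⟩ h
    simp only [mem_filter, mem_univ, true_and] at h ⊢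
    have hxy := hadd h
    refine ⟨inv_ne_zero hxy, ?_⟩
    rw [← h]
    field_simp
    ring
  · rintro ⟨r, u⟩ h
    simp only [mem_filter, mem_univ, true_and] at h ⊢
    obtain ⟨hr, h⟩ := h
    field_simp
    linear_combination (-2) * h
  · rintro ⟨x, y⟩ h
    have hxy := hadd (mem_filter.mp h).2
    ext <;> dsimp only <;> field_simp <;> ring
  · rintro ⟨r, u⟩ h
    have hr : r ≠ 0 := (mem_filter.mp h).2.1
    dsimp only
    rw [hinv u hr]
    ext <;> dsimp only <;> field_simp
    ring

theorem card_mul_mul_add_eq (hF : ringChar F ≠ 2) {a : F} (ha : a ≠ 0) :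
    (#{z : F × F | z.1 * z.2 * (z.1 + z.2) = a} : ℤ) =
      Fintype.card F - 2 + cubicCharSum (4 * a) := by
  have hfiber (r : F) : (#{u : F | r ≠ 0 ∧ u ^ 2 = 1 - 4 * a * r ^ 3} : ℤ) =
      1 + quadraticChar F (1 - 4 * a * r ^ 3) - if r = 0 then 2 else 0 := by
    split_ifs with hr
    · simp [hr]
    · rw [sub_zero, add_comm, ← quadraticChar_card_sqrts hF]
      congr 2
      ext u
      simp [hr]
  calc (#{z : F × F | z.1 * z.2 * (z.1 + z.2) = a} : ℤ)
      = ∑ r : F, (#{u : F | r ≠ 0 ∧ u ^ 2 = 1 - 4 * a * r ^ 3} : ℤ) := by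
        rw [card_mul_mul_add_eq_eq_card_sq_eq (Ring.two_ne_zero hF) ha]
        simp only [card_filter, Nat.cast_sum, Fintype.sum_prod_type]
    _ = Fintype.card F - 2 + cubicCharSum (4 * a) := by
        simp only [hfiber, sum_sub_distrib, sum_add_distrib, sum_const, card_univ, nsmul_one,
          sum_ite_eq', mem_univ, if_true, cubicCharSum]
        ring

theorem three_mul_card_image_sqAddDiv (hF : ringChar F ≠ 2) (h3 : (3 : F) ≠ 0) {a : F}
    (ha : a ≠ 0) :
    3 * (#((univ.erase 0).image (sqAddDiv a)) : ℤ) =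
      2 * Fintype.card F - 1 - cubicCharSum (4 * a) := by
  have hcurve := card_mul_mul_add_eq hF ha
  have hfibers := card_mul_mul_add_eq_add_three_mul_card_image h3 ha
  have : 1 < Fintype.card F := Fintype.one_lt_card
  lia

end ValueSet

theorem card_filter_range_eq_card_image_sqAddDiv {p : ℕ} [Fact p.Prime] {a : ℤ}
    (ha : (a : ZMod p) ≠ 0) :
    ((Finset.range p).filter fun b : ℕ => ∃ x ∈ Finset.Icc 1 (p - 1),
      (x : ℤ) ^ 3 + a ≡ (b : ℤ) * (x : ℤ) [ZMOD (p : ℤ)]).card =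
      #((univ.erase 0).image (sqAddDiv (a : ZMod p))) := by
  have hcast (b x : ℕ) : (x : ℤ) ^ 3 + a ≡ (b : ℤ) * (x : ℤ) [ZMOD (p : ℤ)] ↔
      (x : ZMod p) ^ 3 + a = b * x := by
    rw [← ZMod.intCast_eq_intCast_iff]
    push_cast
    rfl
  simp only [hcast]
  refine card_bij' (fun b _ => (b : ZMod p)) (fun b _ => b.val) ?_ ?_ ?_ ?_
  · intro b hb
    obtain ⟨-, x, -, hx⟩ := by simpa only [mem_filter] using hb
    have hx0 : (x : ZMod p) ≠ 0 := by
      intro h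
      simp [h, ha] at hx
    exact mem_image.mpr ⟨x, by simpa using hx0, (sqAddDiv_eq_iff _ _ hx0).mpr hx⟩
  · intro b hb
    obtain ⟨x, hx, rfl⟩ := mem_image.mp hb
    have hx0 : x ≠ 0 := ne_of_mem_erase hx
    simp only [mem_filter, mem_range, mem_Icc]
    refine ⟨ZMod.val_lt _, x.val, ⟨?_, Nat.le_sub_one_of_lt (ZMod.val_lt x)⟩, ?_⟩
    · exact Nat.one_le_iff_ne_zero.mpr ((ZMod.val_ne_zero x).mpr hx0)
    · simpa using (sqAddDiv_eq_iff _ _ hx0).mp rfl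
  · intro b hb
    exact ZMod.val_cast_of_lt (mem_range.mp (mem_filter.mp hb).1)
  · intro b _
    exact ZMod.natCast_zmod_val b

theorem pow_card_sub_one_div_three_four_mul {p : ℕ} [Fact p.Prime] (hp1 : p % 3 = 1) {a : ZMod p}
    (ha : a ≠ 0) : (4 * a) ^ ((p - 1) / 3) = ((2 * a ^ 2) ^ ((p - 1) / 3)) ^ 2 := by
  have hcube : (a ^ 3) ^ ((p - 1) / 3) = 1 := by
    rw [← pow_mul, Nat.mul_div_cancel' (by lia), ZMod.pow_card_sub_one_eq_one ha]
  calc (4 * a) ^ ((p - 1) / 3) = (4 * a) ^ ((p - 1) / 3) * (a ^ 3) ^ ((p - 1) / 3) := by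
        rw [hcube, mul_one]
    _ = ((2 * a ^ 2) ^ ((p - 1) / 3)) ^ 2 := by
        rw [← mul_pow, pow_right_comm]
        congr 1
        ring

theorem stmt_1 (p : ℕ) [hp : Fact p.Prime] (hp1 : p % 3 = 1)
    (A B : ℤ) (hpAB : (p : ℤ) = A ^ 2 + 3 * B ^ 2) (hA : A % 3 = 1)
    (a : ℤ) (ha : ¬ (p : ℤ) ∣ a) :
    (((2 * a ^ 2 : ℤ) : ZMod p) ^ ((p - 1) / 3) = 1 →
      3 * (((Finset.range p).filter (fun b : ℕ =>
      ∃ x ∈ Finset.Icc 1 (p - 1),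
        (x : ℤ) ^ 3 + (a) ≡ (b : ℤ) * (x : ℤ) [ZMOD (p : ℤ)])).card : ℤ) = 2 * (p : ℤ) - 1 + 2 * A) ∧
    (((2 * a ^ 2 : ℤ) : ZMod p) ^ ((p - 1) / 3) = (-1 + (A : ZMod p) * (B : ZMod p)⁻¹) / 2 →
      3 * (((Finset.range p).filter (fun b : ℕ =>
      ∃ x ∈ Finset.Icc 1 (p - 1),
        (x : ℤ) ^ 3 + (a) ≡ (b : ℤ) * (x : ℤ) [ZMOD (p : ℤ)])).card : ℤ) = 2 * (p : ℤ) - 1 - A + 3 * B) ∧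
    (((2 * a ^ 2 : ℤ) : ZMod p) ^ ((p - 1) / 3) = (-1 - (A : ZMod p) * (B : ZMod p)⁻¹) / 2 →
      3 * (((Finset.range p).filter (fun b : ℕ =>
      ∃ x ∈ Finset.Icc 1 (p - 1),
        (x : ℤ) ^ 3 + (a) ≡ (b : ℤ) * (x : ℤ) [ZMOD (p : ℤ)])).card : ℤ) = 2 * (p : ℤ) - 1 - A - 3 * B) := by
  have ha0 : (a : ZMod p) ≠ 0 := mt (ZMod.intCast_zmod_eq_zero_iff_dvd a p).mp ha
  have hF := ringChar_zmod_ne_two_of_mod_three hp1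
  have h2 : (2 : ZMod p) ≠ 0 := Ring.two_ne_zero hF
  have hI := intCast_mul_inv_sq_eq_neg_three hpAB
  have hpow := pow_card_sub_one_div_three_four_mul hp1 ha0
  rw [card_filter_range_eq_card_image_sqAddDiv ha0,
    three_mul_card_image_sqAddDiv hF (three_ne_zero_of_mod_three hp1) ha0, ZMod.card]
  push_cast
  refine ⟨fun h => ?_, fun h => ?_, fun h => ?_⟩ <;> rw [h] at hpow
  · rw [cubicCharSum_eq_of_pow_eq_one hp1 hpAB hA (hpow.trans (one_pow 2))]
    ring
  · rw [cubicCharSum_eq_of_pow_eq hp1 (B := -B) (by rwa [neg_sq]) hA]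
    · ring
    · rw [hpow]
      push_cast
      rw [inv_neg]
      field_simp
      linear_combination hI
  · rw [cubicCharSum_eq_of_pow_eq hp1 hpAB hA]
    · ring
    · rw [hpow]
      field_simp
      linear_combination hI
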